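/- arXiv:2102.05355 — 4 statements merged into one kernel-verified Lean document; each statement's English description precedes it below -/
import Mathlib

section
/- Let $d$ be a positive integer, let $p_2 \geq 3$ be an odd integer, and let $n$ be a non-negative integer. Then $A_{2,p_2}(n) \equiv B_{2,p_2}(n) \pmod{2}$, i.e., the number of partitions of $n$ into $d$-th powers of integers divisible by neither $2$ nor $p_2$ is congruent modulo $2$ to the number of partitions of $n$ into distinct colored $d$-th powers of integers not divisible by $p_2$, where each part carries one of $2^d-1$ colors. -/
/-- `A d p₁ p₂ n`: the number of partitions of `n` all of whose parts are of the form `k ^ d`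
with `k` a positive integer divisible by neither `p₁` nor `p₂`, represented as multisets of
the bases `k`. -/
noncomputable def A (d p₁ p₂ n : ℕ) : ℕ :=
  Nat.card {s : Multiset ℕ //
    (∀ k ∈ s, 0 < k ∧ ¬ p₁ ∣ k ∧ ¬ p₂ ∣ k) ∧ (s.map (· ^ d)).sum = n}

/-- `B d p₁ p₂ n`: the number of partitions of `n` into distinct colored `d`-th powers of
positive integers not divisible by `p₂`, each part carrying one of `p₁ ^ d - 1` colors;
represented as finite sets of pairs (base, color). -/
noncomputable def B (d p₁ p₂ n : ℕ) : ℕ :=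
  Nat.card {s : Finset (ℕ × ℕ) //
    (∀ x ∈ s, 0 < x.1 ∧ ¬ p₂ ∣ x.1 ∧ 1 ≤ x.2 ∧ x.2 ≤ p₁ ^ d - 1) ∧
    (s.sum fun x => x.1 ^ d) = n}

/-- multisets supported in `s` with total weight `n` -/
def MS (w : ℕ → ℕ) (s : Finset ℕ) (n : ℕ) : Set (Multiset ℕ) :=
  {m | (∀ k ∈ m, k ∈ s) ∧ (m.map w).sum = n}

lemma MS_finite (w : ℕ → ℕ) (s : Finset ℕ) (hs : ∀ k ∈ s, 0 < w k) (n : ℕ) :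
    (MS w s n).Finite := by
  apply (Set.finite_Iic (n • s.val)).subset
  rintro m ⟨hm, hn⟩
  rw [Set.mem_Iic, Multiset.le_iff_count]
  intro k
  by_cases hk : k ∈ m
  · have h1 : Multiset.count k s.val = 1 :=
      Multiset.count_eq_one_of_mem s.nodup (hm k hk)
    rw [Multiset.count_nsmul, h1, mul_one]
    have h2 : m.card • 1 ≤ (m.map w).sum := by
      have := Multiset.card_nsmul_le_sum (s := m.map w) (a := 1) (by
        intro x hx
        obtain ⟨y, hy, rfl⟩ := Multiset.mem_map.1 hx
        exact hs y (hm y hy))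
      simpa using this
    have := Multiset.count_le_card k m
    simp at h2
    omega
  · rw [Multiset.count_eq_zero_of_notMem hk]; exact Nat.zero_le _

lemma MS_insert (w : ℕ → ℕ) (s : Finset ℕ) (k : ℕ) (hk : k ∉ s)
    (hs : ∀ j ∈ insert k s, 0 < w j) (n : ℕ) :
    (MS w (insert k s) n).ncard = (MS w s n).ncard +
      if w k ≤ n then (MS w (insert k s) (n - w k)).ncard else 0 := by
  have hs' : ∀ j ∈ s, 0 < w j := fun j hj => hs j (Finset.mem_insert_of_mem hj)
  have hnk : ∀ m ∈ MS w (insert k s) n, k ∉ m → m ∈ MS w s n := by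
    rintro m ⟨h1, h2⟩ h
    refine ⟨fun j hj => ?_, h2⟩
    rcases Finset.mem_insert.1 (h1 j hj) with rfl | h'
    · exact absurd hj h
    · exact h'
  have hsub : MS w s n ⊆ MS w (insert k s) n :=
    fun m hm => ⟨fun j hj => Finset.mem_insert_of_mem (hm.1 j hj), hm.2⟩
  split_ifs with h
  · rw [← Set.ncard_image_of_injective (MS w (insert k s) (n - w k))
      (f := fun t => k ::ₘ t) (fun a b h => (Multiset.cons_inj_right k).1 h), ← Set.ncard_union_eq ?_ (MS_finite w s hs' n) ((MS_finite w _ hs _).image _)]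
    · congr 1
      apply Set.Subset.antisymm
      · intro m hm
        by_cases hkm : k ∈ m
        · right
          obtain ⟨t, rfl⟩ := Multiset.exists_cons_of_mem hkm
          refine ⟨t, ⟨fun j hj => hm.1 j (Multiset.mem_cons_of_mem hj), ?_⟩, rfl⟩
          have := hm.2
          simp at this
          omega
        · exact Or.inl (hnk m hm hkm)
      · apply Set.union_subset hsub
        rintro _ ⟨t, ⟨h1, h2⟩, rfl⟩
        refine ⟨fun j hj => ?_, ?_⟩
        · rcases Multiset.mem_cons.1 hj with rfl | hj
          · exact Finset.mem_insert_self _ _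
          · exact h1 j hj
        · simp [h2]; omega
    · rw [Set.disjoint_left]
      rintro _ ⟨h1, h2⟩ ⟨t, -, rfl⟩
      exact hk (h1 k (Multiset.mem_cons_self _ _))
  · rw [add_zero]
    congr 1
    refine Set.Subset.antisymm (fun m hm => hnk m hm fun hkm => h ?_) hsub
    obtain ⟨t, rfl⟩ := Multiset.exists_cons_of_mem hkm
    have := hm.2
    simp at this
    omega

lemma MS_genfun (w : ℕ → ℕ) (s : Finset ℕ) (hs : ∀ k ∈ s, 0 < w k) :
    (PowerSeries.mk fun n => ((MS w s n).ncard : ZMod 2)) *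
      ∏ k ∈ s, (1 + (PowerSeries.X : PowerSeries (ZMod 2)) ^ w k) = 1 := by
  induction s using Finset.induction_on with
  | empty =>
    ext n
    rw [Finset.prod_empty, mul_one, PowerSeries.coeff_mk, PowerSeries.coeff_one]
    split_ifs with h
    · subst h
      have : MS w ∅ 0 = {0} := by
        ext m
        constructor
        · rintro ⟨h, -⟩
          exact Multiset.eq_zero_of_forall_notMem fun a ha => by simpa using h a ha
        · rintro rfl; simp [MS]
      simp [this]
    · have : MS w ∅ n = ∅ := by
        ext m
        simp only [Set.mem_empty_iff_false, iff_false]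
        rintro ⟨h1, h2⟩
        have : m = 0 := Multiset.eq_zero_of_forall_notMem fun a ha => by simpa using h1 a ha
        subst this
        exact h (by simpa using h2.symm)
      simp [this]
  | insert k s hk ih =>
    refine Eq.trans ?_ (ih fun j hj => hs j (Finset.mem_insert_of_mem hj))
    rw [Finset.prod_insert hk, ← mul_assoc]
    congr 1
    ext n
    rw [mul_add, mul_one, map_add, PowerSeries.coeff_mul_X_pow', PowerSeries.coeff_mk,
      PowerSeries.coeff_mk, PowerSeries.coeff_mk, MS_insert w s k hk hs n]
    split_ifs
    · push_cast
      rw [add_assoc, CharTwo.add_self_eq_zero, add_zero]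
    · simp

lemma dist_genfun {ι : Type*} [DecidableEq ι] (w : ι → ℕ) (s : Finset ι) (n : ℕ) :
    PowerSeries.coeff n (∏ k ∈ s, (1 + (PowerSeries.X : PowerSeries (ZMod 2)) ^ w k)) =
      ((s.powerset.filter fun t => ∑ k ∈ t, w k = n).card : ZMod 2) := by
  rw [Finset.prod_one_add, map_sum, Finset.card_filter]
  push_cast
  refine Finset.sum_congr rfl fun t _ => ?_
  rw [Finset.prod_pow_eq_pow_sum, PowerSeries.coeff_X_pow]
  simp [eq_comm]

lemma prod_trunc (w : ℕ → ℕ) (s : Finset ℕ) (n : ℕ) (hs : ∀ k ∈ s, n < w k) :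
    ∃ R : PowerSeries (ZMod 2),
      ∏ k ∈ s, (1 + (PowerSeries.X : PowerSeries (ZMod 2)) ^ w k) =
        1 + PowerSeries.X ^ (n + 1) * R := by
  induction s using Finset.induction_on with
  | empty => exact ⟨0, by simp⟩
  | insert k s hk ih =>
    obtain ⟨R, hR⟩ := ih fun j hj => hs j (Finset.mem_insert_of_mem hj)
    obtain ⟨c, hc⟩ := Nat.exists_eq_add_of_le (Nat.succ_le_of_lt (hs k (Finset.mem_insert_self _ _)))
    refine ⟨R + PowerSeries.X ^ c * (1 + PowerSeries.X ^ (n + 1) * R), ?_⟩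
    rw [Finset.prod_insert hk, hR, hc, Nat.succ_eq_add_one]
    ring

lemma one_add_X_pow_ne_zero (m : ℕ) (hm : 0 < m) :
    1 + (PowerSeries.X : PowerSeries (ZMod 2)) ^ m ≠ 0 := by
  intro h
  have := congrArg (PowerSeries.coeff 0) h
  rw [map_add, PowerSeries.coeff_X_pow, if_neg hm.ne] at this
  simp at this

theorem stmt0 (d p₂ : ℕ) (hd : 0 < d) (hp₂ : 3 ≤ p₂) (hodd : Odd p₂) (n : ℕ) :
    A d 2 p₂ n ≡ B d 2 p₂ n [MOD 2] := by
  rw [← ZMod.natCast_eq_natCast_iff]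
  set S : Finset ℕ := (Finset.Icc 1 (2 * n)).filter fun k => ¬ p₂ ∣ k with hS
  set S' : Finset ℕ := (Finset.Icc 1 n).filter fun k => ¬ p₂ ∣ k with hS'
  set O : Finset ℕ := S.filter fun k => ¬ 2 ∣ k with hO
  have hle : ∀ k : ℕ, k ≤ k ^ d := fun k => Nat.le_self_pow hd.ne' k
  let X : PowerSeries (ZMod 2) := PowerSeries.X
  let PA : PowerSeries (ZMod 2) :=
    PowerSeries.mk fun n => ((MS (· ^ d) O n).ncard : ZMod 2)
  have hA : (A d 2 p₂ n : ZMod 2) = PowerSeries.coeff n PA := by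
    rw [PowerSeries.coeff_mk, ← Nat.card_coe_set_eq]
    refine congrArg _ (Nat.card_congr (Equiv.subtypeEquivRight fun m => ?_))
    constructor
    · rintro ⟨h1, h2⟩
      refine ⟨fun k hk => ?_, h2⟩
      obtain ⟨a, b, c⟩ := h1 k hk
      have h3 : k ^ d ≤ n := by
        rw [← h2]
        exact Multiset.le_sum_of_mem (Multiset.mem_map_of_mem (· ^ d) hk)
      have := hle k
      simp only [hO, hS, Finset.mem_filter, Finset.mem_Icc]
      exact ⟨⟨by omega, c⟩, b⟩
    · rintro ⟨h1, h2⟩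
      refine ⟨fun k hk => ?_, h2⟩
      have := h1 k hk
      simp only [hO, hS, Finset.mem_filter, Finset.mem_Icc] at this
      exact ⟨by omega, this.2, this.1.2⟩
  have hB : (B d 2 p₂ n : ZMod 2) =
      PowerSeries.coeff n ((∏ k ∈ S, (1 + X ^ (k ^ d))) ^ (2 ^ d - 1)) := by
    have h1 : (∏ k ∈ S, (1 + X ^ (k ^ d))) ^ (2 ^ d - 1) =
        ∏ x ∈ S ×ˢ Finset.Icc 1 (2 ^ d - 1), (1 + X ^ (x.1 ^ d)) := by
      rw [Finset.prod_product, ← Finset.prod_pow]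
      simp
    rw [h1, dist_genfun (fun x : ℕ × ℕ => x.1 ^ d), ← Nat.card_eq_finsetCard]
    refine congrArg _ (Nat.card_congr (Equiv.subtypeEquivRight fun m => ?_))
    rw [Finset.mem_filter, Finset.mem_powerset]
    constructor
    · rintro ⟨h1, h2⟩
      refine ⟨fun x hx => ?_, h2⟩
      obtain ⟨a, b, c⟩ := h1 x hx
      have h3 : x.1 ^ d ≤ n := by
        rw [← h2]
        exact Finset.single_le_sum (f := fun x : ℕ × ℕ => x.1 ^ d)
          (fun _ _ => Nat.zero_le _) hx
      have := hle x.1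
      simp only [hS, Finset.mem_product, Finset.mem_filter, Finset.mem_Icc]
      exact ⟨⟨by omega, b⟩, c⟩
    · rintro ⟨h1, h2⟩
      refine ⟨fun x hx => ?_, h2⟩
      have := h1 hx
      simp only [hS, Finset.mem_product, Finset.mem_filter, Finset.mem_Icc] at this
      exact ⟨by omega, this.1.2, this.2⟩
  have hPA : PA * ∏ k ∈ O, (1 + X ^ (k ^ d)) = 1 := by
    apply MS_genfun (· ^ d) O
    intro k hk
    simp [hO, hS] at hk
    exact Nat.pow_pos (by omega)
  have hF : (∏ k ∈ S, (1 + X ^ (k ^ d))) =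
      (∏ k ∈ O, (1 + X ^ (k ^ d))) * ∏ k ∈ S', (1 + X ^ ((2 * k) ^ d)) := by
    rw [← Finset.prod_filter_mul_prod_filter_not S (fun k => ¬ 2 ∣ k)]
    congr 1
    symm
    apply Finset.prod_bij (fun k _ => 2 * k)
    · intro k hk
      simp [hS, hS'] at hk ⊢
      refine ⟨by omega, fun h => hk.2 ?_⟩
      exact (Nat.Coprime.dvd_of_dvd_mul_left (Nat.coprime_two_right.2 hodd) h)
    · intro a _ b _ h
      omega
    · intro b hb
      simp only [hS, hS', Finset.mem_filter, Finset.mem_Icc, not_not] at hb ⊢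
      obtain ⟨⟨h1, h2⟩, c, rfl⟩ := hb
      exact ⟨c, ⟨by omega, fun h => h2 (h.mul_left 2)⟩, rfl⟩
    · intros; rfl
  have hG : (∏ k ∈ S, (1 + X ^ (k ^ d))) ^ (2 ^ d) = ∏ k ∈ S, (1 + X ^ ((2 * k) ^ d)) := by
    have : CharP (PowerSeries (ZMod 2)) 2 :=
      charP_of_injective_algebraMap (R := ZMod 2) (algebraMap (ZMod 2) _).injective 2
    rw [← Finset.prod_pow]
    refine Finset.prod_congr rfl fun k _ => ?_
    rw [add_pow_char_pow, one_pow, ← pow_mul, mul_pow, mul_comm]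
  have hsub : S' ⊆ S := by
    intro k hk
    simp [hS, hS'] at hk ⊢
    exact ⟨by omega, hk.2⟩
  obtain ⟨R, hR⟩ := prod_trunc (fun k => (2 * k) ^ d) (S \ S') n (by
    intro k hk
    simp [hS, hS'] at hk
    have := hle (2 * k)
    have : n < k := by
      by_contra h
      exact hk.1.2 (hk.2 (by omega) (by omega))
    show n < (2 * k) ^ d
    omega)
  have hR' : ∏ k ∈ S \ S', (1 + X ^ ((2 * k) ^ d)) = 1 + X ^ (n + 1) * R := hR
  rw [← Finset.prod_sdiff (f := fun k => 1 + X ^ ((2 * k) ^ d)) hsub, hR'] at hG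
  have hE : (∏ k ∈ S', (1 + X ^ ((2 * k) ^ d))) ≠ 0 := by
    rw [Finset.prod_ne_zero_iff]
    intro k hk
    simp [hS'] at hk
    exact one_add_X_pow_ne_zero _ (Nat.pow_pos (by omega))
  set PB := (∏ k ∈ S, (1 + X ^ (k ^ d))) ^ (2 ^ d - 1) with hPB
  have h3 : PB * (∏ k ∈ O, (1 + X ^ (k ^ d))) = 1 + X ^ (n + 1) * R := by
    apply mul_right_cancel₀ hE
    rw [mul_assoc, ← hF, ← hG, hPB, ← pow_succ, Nat.sub_add_cancel Nat.one_le_two_pow]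
  have h4 : PB = PA + X ^ (n + 1) * (R * PA) := by
    calc PB = PB * (∏ k ∈ O, (1 + X ^ (k ^ d))) * PA := by
          rw [mul_assoc, mul_comm _ PA, hPA, mul_one]
      _ = _ := by rw [h3]; ring
  rw [hA, hB, h4, map_add, PowerSeries.coeff_X_pow_mul', if_neg (by omega), add_zero]
end

section
/- Let $d$ be a positive integer, let $p_1 \geq 3$ be an odd prime, let $p_2 \geq 2$ be an integer with $p_1 \nmid p_2$, and let $n \geq 1$. Then $\sum_{i=0}^{n} A_{p_1,p_2}(i)\, C_{p_1,p_2}(n-i) \equiv 0 \pmod{p_1}$. -/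
/-- `C d p₁ p₂ n`: the number of partitions of `n` into colored `d`-th powers of positive
integers not divisible by `p₂`, each part carrying one of `p₁ ^ d - 1` colors; represented
as multisets of pairs (base, color). -/
noncomputable def C (d p₁ p₂ n : ℕ) : ℕ :=
  Nat.card {s : Multiset (ℕ × ℕ) //
    (∀ x ∈ s, 0 < x.1 ∧ ¬ p₂ ∣ x.1 ∧ 1 ≤ x.2 ∧ x.2 ≤ p₁ ^ d - 1) ∧
    (s.map fun x => x.1 ^ d).sum = n}


/-- Number of multisets of elements satisfying `P` with total weight `n`. -/
noncomputable def cnt {α : Type*} (P : α → Prop) (w : α → ℕ) (n : ℕ) : ℕ :=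
  Nat.card {s : Multiset α // (∀ k ∈ s, P k) ∧ (s.map w).sum = n}

/-- Weights are positive and each weight level is finite. -/
def Good {α : Type*} (P : α → Prop) (w : α → ℕ) : Prop :=
  (∀ a, P a → 0 < w a) ∧ ∀ n, {a | P a ∧ w a ≤ n}.Finite

lemma good_finite {α : Type*} {P : α → Prop} {w : α → ℕ} (h : Good P w) (n : ℕ) :
    Finite {s : Multiset α // (∀ k ∈ s, P k) ∧ (s.map w).sum = n} := by
  classical
  obtain ⟨hpos, hfin⟩ := h
  refine Set.Finite.to_subtype (s := {s : Multiset α | (∀ k ∈ s, P k) ∧ (s.map w).sum = n}) ?_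
  refine (Set.finite_Iic (n • (hfin n).toFinset.val)).subset ?_
  rintro s ⟨hs, hsum⟩
  rw [Set.mem_Iic, Multiset.le_iff_count]
  intro a
  by_cases ha : a ∈ s
  · have hw : w a ≤ n := by
      rw [← hsum]
      exact Multiset.single_le_sum (by simp) _ (Multiset.mem_map_of_mem w ha)
    have hcard : Multiset.card s ≤ n := by
      have := Multiset.card_nsmul_le_sum (s := s.map w) (a := 1) (by
        intro x hx
        obtain ⟨b, hb, rfl⟩ := Multiset.mem_map.1 hx
        exact hpos b (hs b hb))
      simpa [hsum] using this
    have h1 : 1 ≤ Multiset.count a (hfin n).toFinset.val :=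
      Multiset.one_le_count_iff_mem.2 (by simpa using ⟨hs a ha, hw⟩)
    rw [Multiset.count_nsmul]
    calc Multiset.count a s ≤ n := (Multiset.count_le_card a s).trans hcard
      _ = n * 1 := by simp
      _ ≤ _ := Nat.mul_le_mul_left _ h1
  · simp [Multiset.count_eq_zero_of_notMem ha]

lemma cnt_congr {α β : Type*} {P : α → Prop} {Q : β → Prop} {w : α → ℕ} {v : β → ℕ}
    (f : α → β) (g : β → α) (hf : ∀ a, P a → Q (f a) ∧ g (f a) = a ∧ v (f a) = w a)
    (hg : ∀ b, Q b → P (g b) ∧ f (g b) = b) (n : ℕ) : cnt P w n = cnt Q v n := by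
  refine Nat.card_congr ⟨fun s => ⟨s.1.map f, ?_, ?_⟩, fun s => ⟨s.1.map g, ?_, ?_⟩, ?_, ?_⟩
  · intro k hk
    obtain ⟨a, ha, rfl⟩ := Multiset.mem_map.1 hk
    exact (hf a (s.2.1 a ha)).1
  · rw [Multiset.map_map]
    refine Eq.trans ?_ s.2.2
    congr 1
    exact Multiset.map_congr rfl fun a ha => (hf a (s.2.1 a ha)).2.2
  · intro k hk
    obtain ⟨a, ha, rfl⟩ := Multiset.mem_map.1 hk
    exact (hg a (s.2.1 a ha)).1
  · rw [Multiset.map_map]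
    refine Eq.trans ?_ s.2.2
    congr 1
    refine Multiset.map_congr rfl fun a ha => ?_
    have h := hg a (s.2.1 a ha)
    rw [Function.comp, ← (hf _ h.1).2.2, h.2]
  · intro s
    ext1
    simp only [Multiset.map_map]
    conv_rhs => rw [← Multiset.map_id s.1]
    exact Multiset.map_congr rfl fun a ha => (hf a (s.2.1 a ha)).2.1
  · intro s
    ext1
    simp only [Multiset.map_map]
    conv_rhs => rw [← Multiset.map_id s.1]
    exact Multiset.map_congr rfl fun a ha => (hg a (s.2.1 a ha)).2

lemma cnt_or {α : Type*} {P Q R : α → Prop} {w : α → ℕ} (hP : Good P w) (hQ : Good Q w)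
    (hd : ∀ a, P a → ¬ Q a) (hR : ∀ a, R a ↔ P a ∨ Q a) (n : ℕ) :
    cnt R w n = ∑ ij ∈ Finset.HasAntidiagonal.antidiagonal n, cnt P w ij.1 * cnt Q w ij.2 := by
  classical
  have := good_finite hP
  have := good_finite hQ
  rw [← Finset.sum_coe_sort]
  unfold cnt
  simp_rw [← Nat.card_prod]
  rw [← Nat.card_sigma]
  symm
  refine Nat.card_congr (Equiv.ofBijective (fun x => ⟨x.2.1.1 + x.2.2.1, ?_, ?_⟩) ⟨?_, ?_⟩)
  · intro k hk
    rw [hR]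
    rcases Multiset.mem_add.1 hk with h | h
    · exact Or.inl (x.2.1.2.1 k h)
    · exact Or.inr (x.2.2.2.1 k h)
  · rw [Multiset.map_add, Multiset.sum_add, x.2.1.2.2, x.2.2.2.2]
    exact Finset.HasAntidiagonal.mem_antidiagonal.1 x.1.2
  · rintro ⟨⟨⟨i, j⟩, h⟩, ⟨s, hs, hs'⟩, ⟨t, ht, ht'⟩⟩ ⟨⟨⟨i', j'⟩, h'⟩, ⟨s', hs1, hs1'⟩, ⟨t', ht1, ht1'⟩⟩ he
    simp only [Subtype.mk.injEq] at he
    have e1 : s = s' := by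
      have := congrArg (Multiset.filter P) he
      rw [Multiset.filter_add, Multiset.filter_add, Multiset.filter_eq_self.2 hs,
        Multiset.filter_eq_self.2 hs1,
        Multiset.filter_eq_nil.2 (fun a ha hp => hd a hp (ht a ha)),
        Multiset.filter_eq_nil.2 (fun a ha hp => hd a hp (ht1 a ha))] at this
      simpa using this
    subst e1
    have e2 : t = t' := by simpa using he
    subst e2
    dsimp only at hs' hs1' ht' ht1'
    subst hs' ht' hs1' ht1'
    rfl
  · rintro ⟨s, hs, hs'⟩
    refine ⟨⟨⟨(((s.filter P).map w).sum, ((s.filter (fun a => ¬ P a)).map w).sum), ?_⟩,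
      ⟨s.filter P, ?_, rfl⟩, ⟨s.filter (fun a => ¬ P a), ?_, rfl⟩⟩, ?_⟩
    · rw [Finset.HasAntidiagonal.mem_antidiagonal, ← Multiset.sum_add, ← Multiset.map_add,
        Multiset.filter_add_not, hs']
    · intro k hk
      exact (Multiset.mem_filter.1 hk).2
    · intro k hk
      have := Multiset.mem_filter.1 hk
      exact ((hR k).1 (hs k this.1)).resolve_left this.2
    · ext1
      exact Multiset.filter_add_not P s

lemma cnt_mul {α : Type*} (P : α → Prop) (w : α → ℕ) (c : ℕ) (hc : c ≠ 0) (n : ℕ) :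
    cnt P (fun a => c * w a) n = if c ∣ n then cnt P w (n / c) else 0 := by
  unfold cnt
  split_ifs with h
  · obtain ⟨m, rfl⟩ := h
    rw [Nat.mul_div_cancel_left _ (Nat.pos_of_ne_zero hc)]
    refine Nat.card_congr (Equiv.subtypeEquivRight fun s => and_congr_right fun _ => ?_)
    rw [Multiset.sum_map_mul_left]
    exact Nat.mul_right_inj hc
  · rw [Nat.card_eq_zero]
    left
    refine ⟨fun s => h ?_⟩
    rw [← s.2.2, Multiset.sum_map_mul_left]
    exact dvd_mul_right _ _

lemma cnt_zero {α : Type*} {P : α → Prop} {w : α → ℕ} (h : Good P w) : cnt P w 0 = 1 := by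
  unfold cnt
  rw [Nat.card_eq_one_iff_unique]
  refine ⟨⟨?_⟩, ⟨0, by simp, by simp⟩⟩
  have key : ∀ s : Multiset α, (∀ k ∈ s, P k) → (s.map w).sum = 0 → s = 0 := by
    intro s hs h0
    refine Multiset.eq_zero_of_forall_notMem fun a ha => ?_
    have h1 := Multiset.single_le_sum (by simp) _ (Multiset.mem_map_of_mem w ha)
    have := h.1 a (hs a ha)
    omega
  rintro ⟨s, hs, hs'⟩ ⟨t, ht, ht'⟩
  ext1
  exact (key s hs hs').trans (key t ht ht').symm

/-- Generating function. -/
noncomputable def gf (p : ℕ) {α : Type*} (P : α → Prop) (w : α → ℕ) : PowerSeries (ZMod p) :=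
  PowerSeries.mk fun n => (cnt P w n : ZMod p)

lemma gf_or (p : ℕ) {α : Type*} {P Q R : α → Prop} {w : α → ℕ} (hP : Good P w) (hQ : Good Q w)
    (hd : ∀ a, P a → ¬ Q a) (hR : ∀ a, R a ↔ P a ∨ Q a) :
    gf p R w = gf p P w * gf p Q w := by
  ext n
  simp [gf, PowerSeries.coeff_mul, cnt_or hP hQ hd hR]

lemma gf_color (p : ℕ) {α : Type*} {P : α → Prop} {w : α → ℕ} (hP : Good P w) (m : ℕ) :
    gf p (fun x : α × ℕ => P x.1 ∧ 1 ≤ x.2 ∧ x.2 ≤ m) (fun x => w x.1) = gf p P w ^ m := by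
  have hgood : ∀ S : Set ℕ, S.Finite → 
      Good (fun x : α × ℕ => P x.1 ∧ x.2 ∈ S) (fun x => w x.1) := by
    intro S hS
    refine ⟨fun a ha => hP.1 _ ha.1, fun n => ((hP.2 n).prod hS).subset ?_⟩
    rintro ⟨a, c⟩ ⟨⟨h1, h2⟩, h3⟩
    exact ⟨⟨h1, h3⟩, h2⟩
  induction m with
  | zero =>
    rw [pow_zero]
    have hg := hgood (Set.Icc 1 0) (Set.finite_Icc _ _)
    have h0 := cnt_zero hg
    ext n
    rw [PowerSeries.coeff_one, gf, PowerSeries.coeff_mk]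
    split_ifs with hn
    · subst hn
      exact_mod_cast congrArg (Nat.cast : ℕ → ZMod p) h0
    · unfold cnt
      rw [Nat.card_eq_zero.2, Nat.cast_zero]
      left
      refine ⟨?_⟩
      rintro ⟨s, hs, hs'⟩
      have : s = 0 := Multiset.eq_zero_of_forall_notMem fun a ha => by
        have := hs a ha
        omega
      subst this
      simp at hs'
      omega
  | succ m ih =>
    have h1 : gf p (fun x : α × ℕ => P x.1 ∧ x.2 ∈ ({m + 1} : Set ℕ)) (fun x => w x.1)
        = gf p P w := by
      ext n
      simp only [gf, PowerSeries.coeff_mk]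
      congr 1
      refine cnt_congr (fun x => x.1) (fun a => (a, m + 1)) ?_ ?_ n
      · rintro ⟨a, c⟩ ⟨h1, h2⟩
        simp at h2
        simp [h1, h2]
      · intro b hb
        simp [hb]
    rw [pow_succ, ← ih, ← h1]
    refine gf_or p (hgood (Set.Icc 1 m) (Set.finite_Icc _ _)) (hgood _ (Set.finite_singleton _))
      ?_ ?_
    · rintro ⟨a, c⟩ ⟨_, h2⟩ ⟨_, h3⟩
      simp at h2 h3
      omega
    · rintro ⟨a, c⟩
      simp only [Set.mem_Icc, Set.mem_singleton_iff, ← and_or_left]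
      refine and_congr_right fun _ => ?_
      omega

theorem stmt1 (d p₁ p₂ n : ℕ) (hd : 0 < d) (hp₁ : p₁.Prime) (hp₁3 : 3 ≤ p₁)
    (hp₂ : 2 ≤ p₂) (hnd : ¬ p₁ ∣ p₂) (hn : 1 ≤ n) :
    (∑ i ∈ Finset.range (n + 1), A d p₁ p₂ i * C d p₁ p₂ (n - i)) ≡ 0 [MOD p₁] := by
  haveI : Fact p₁.Prime := ⟨hp₁⟩
  have hcop : Nat.Coprime p₂ p₁ := ((Nat.Prime.coprime_iff_not_dvd hp₁).2 hnd).symm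
  have hc : p₁ ^ d ≠ 0 := pow_ne_zero _ hp₁.ne_zero
  let w : ℕ → ℕ := fun k => k ^ d
  have hgood : ∀ P : ℕ → Prop, (∀ k, P k → 0 < k) → Good P w := by
    intro P hP
    refine ⟨fun a ha => pow_pos (hP a ha) d, fun m => (Set.finite_Iic m).subset ?_⟩
    rintro a ⟨_, h⟩
    exact (Nat.le_self_pow hd.ne' a).trans h
  let P : ℕ → Prop := fun k => 0 < k ∧ ¬ p₂ ∣ k
  let PA : ℕ → Prop := fun k => 0 < k ∧ ¬ p₁ ∣ k ∧ ¬ p₂ ∣ k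
  let PB : ℕ → Prop := fun k => 0 < k ∧ p₁ ∣ k ∧ ¬ p₂ ∣ k
  have gP : Good P w := hgood _ fun k hk => hk.1
  have gA : Good PA w := hgood _ fun k hk => hk.1
  have gB : Good PB w := hgood _ fun k hk => hk.1
  have e1 : gf p₁ P w = gf p₁ PA w * gf p₁ PB w := by
    refine gf_or p₁ gA gB (fun a h1 h2 => h1.2.1 h2.2.1) fun a => ?_
    simp only [P, PA, PB]
    tauto
  have hAg : PowerSeries.mk (fun n => (A d p₁ p₂ n : ZMod p₁)) = gf p₁ PA w := rfl
  have hCg : PowerSeries.mk (fun n => (C d p₁ p₂ n : ZMod p₁)) = gf p₁ P w ^ (p₁ ^ d - 1) := by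
    rw [← gf_color p₁ gP]
    ext n
    simp only [gf, PowerSeries.coeff_mk, C, cnt, P, and_assoc, w]
  have hB : gf p₁ PB w = gf p₁ P w ^ (p₁ ^ d) := by
    have hfrob : PowerSeries.expand (p₁ ^ d) hc (gf p₁ P w) = gf p₁ P w ^ (p₁ ^ d) := by
      have := MvPowerSeries.map_iterateFrobenius_expand p₁ hp₁.ne_zero (gf p₁ P w) d
      rw [← this]
      have hid : iterateFrobenius (ZMod p₁) p₁ d = RingHom.id _ := Subsingleton.elim _ _
      rw [hid, MvPowerSeries.map_id]
      rfl
    rw [← hfrob]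
    ext m
    rw [PowerSeries.coeff_expand]
    simp only [gf, PowerSeries.coeff_mk]
    have := cnt_mul P w (p₁ ^ d) hc m
    rw [← cnt_congr (P := P) (Q := PB) (w := fun k => p₁ ^ d * w k) (v := w)
      (fun k => p₁ * k) (fun k => k / p₁), this]
    · split_ifs <;> simp
    · rintro a ⟨h1, h2⟩
      refine ⟨⟨Nat.mul_pos hp₁.pos h1, dvd_mul_right _ _, fun h => h2 (hcop.dvd_of_dvd_mul_left h)⟩,
        Nat.mul_div_cancel_left _ hp₁.pos, mul_pow _ _ _⟩
    · rintro _ ⟨h1, ⟨a, rfl⟩, h3⟩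
      simp only [Nat.mul_div_cancel_left _ hp₁.pos]
      exact ⟨⟨Nat.pos_of_mul_pos_left h1, fun h => h3 (dvd_mul_of_dvd_right h _)⟩, trivial⟩
  have hB0 : gf p₁ PB w ≠ 0 := by
    intro h
    have := congrArg (PowerSeries.coeff 0) h
    rw [gf, PowerSeries.coeff_mk, cnt_zero gB] at this
    simp at this
  have key : gf p₁ PA w * gf p₁ P w ^ (p₁ ^ d - 1) = 1 := by
    apply mul_right_cancel₀ hB0
    rw [one_mul, mul_right_comm, ← e1, hB, ← pow_succ', Nat.sub_add_cancel (Nat.pos_of_ne_zero hc)]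
  rw [← hAg, ← hCg] at key
  have := congrArg (PowerSeries.coeff n) key
  rw [PowerSeries.coeff_mul, PowerSeries.coeff_one, if_neg (by omega),
    Finset.Nat.sum_antidiagonal_eq_sum_range_succ_mk] at this
  simp only [PowerSeries.coeff_mk] at this
  rw [← ZMod.natCast_eq_natCast_iff]
  push_cast
  exact this
end

section
/- Let $d$ be a positive integer, let $p_1$ and $p_2$ be distinct primes with $p_2 \geq 3$, and let $n \geq 1$. Then $\sum_{i=0}^{n} A_{p_1,p_2}(i)\, C_{p_2,p_1}(n-i) \equiv 0 \pmod{p_2}$. -/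
/-- multisets supported on `S` of weight `n` -/
def wtSet {α : Type} (w : α → ℕ) (S : Finset α) (n : ℕ) : Set (Multiset α) :=
  {s | (∀ x ∈ s, x ∈ S) ∧ (s.map w).sum = n}

theorem wtSet_finite {α : Type} [DecidableEq α] (w : α → ℕ) (S : Finset α)
    (hw : ∀ x ∈ S, 0 < w x) (n : ℕ) : (wtSet w S n).Finite := by
  refine ((n • S.val).powerset.toFinset.finite_toSet).subset ?_
  rintro s ⟨hs, hsum⟩
  simp only [Finset.mem_coe, Multiset.mem_toFinset, Multiset.mem_powerset]
  have hcard : s.card ≤ n := by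
    have := Multiset.card_nsmul_le_sum (s := s.map w) (a := 1) (by
      intro x hx
      obtain ⟨y, hy, rfl⟩ := Multiset.mem_map.1 hx
      exact hw y (hs y hy))
    simpa [hsum] using this
  rw [Multiset.le_iff_count]
  intro a
  rw [Multiset.count_nsmul]
  by_cases ha : a ∈ s
  · have h1 : Multiset.count a S.val = 1 := Multiset.count_eq_one_of_mem S.nodup (hs a ha)
    rw [h1, mul_one]
    exact (Multiset.count_le_card a s).trans hcard
  · simp [Multiset.count_eq_zero_of_notMem ha]

theorem wtSet_insert {α : Type} [DecidableEq α] (w : α → ℕ) (S : Finset α) (a : α)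
    (ha : a ∉ S) (hw : ∀ x ∈ insert a S, 0 < w x) (n : ℕ) :
    (wtSet w (insert a S) n).ncard = (wtSet w S n).ncard +
      if w a ≤ n then (wtSet w (insert a S) (n - w a)).ncard else 0 := by
  have hwS : ∀ x ∈ S, 0 < w x := fun x hx => hw x (Finset.mem_insert_of_mem hx)
  split_ifs with h
  · have e : wtSet w (insert a S) n = wtSet w S n ∪
        (fun s => a ::ₘ s) '' (wtSet w (insert a S) (n - w a)) := by
      ext s
      constructor
      · rintro ⟨h1, h2⟩
        by_cases has : a ∈ s
        · right
          obtain ⟨t, rfl⟩ := Multiset.exists_cons_of_mem has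
          refine ⟨t, ⟨fun x hx => h1 x (Multiset.mem_cons_of_mem hx), ?_⟩, rfl⟩
          simp at h2
          omega
        · left
          refine ⟨fun x hx => ?_, h2⟩
          rcases Finset.mem_insert.1 (h1 x hx) with rfl | h3
          · exact absurd hx has
          · exact h3
      · rintro (⟨h1, h2⟩ | ⟨t, ⟨h1, h2⟩, rfl⟩)
        · exact ⟨fun x hx => Finset.mem_insert_of_mem (h1 x hx), h2⟩
        · refine ⟨fun x hx => ?_, ?_⟩
          · rcases Multiset.mem_cons.1 hx with rfl | h3
            · exact Finset.mem_insert_self _ _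
            · exact h1 x h3
          · simp [h2]
            omega
    conv_lhs => rw [e]
    rw [Set.ncard_union_eq ?_ (wtSet_finite w S hwS n)
      ((wtSet_finite w _ hw _).image _), Set.ncard_image_of_injective]
    · intro s t hst
      simpa using hst
    · rw [Set.disjoint_left]
      rintro s ⟨h1, -⟩ ⟨t, -, rfl⟩
      exact ha (h1 a (Multiset.mem_cons_self a t))
  · rw [add_zero]
    congr 1
    ext s
    constructor
    · rintro ⟨h1, h2⟩
      refine ⟨fun x hx => ?_, h2⟩
      rcases Finset.mem_insert.1 (h1 x hx) with rfl | h3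
      · exfalso
        apply h
        rw [← h2]
        exact Multiset.le_sum_of_mem (Multiset.mem_map_of_mem w hx)
      · exact h3
    · rintro ⟨h1, h2⟩
      exact ⟨fun x hx => Finset.mem_insert_of_mem (h1 x hx), h2⟩

/-- generating function -/
noncomputable def wtGen (R : Type) [CommRing R] {α : Type} (w : α → ℕ) (S : Finset α) :
    PowerSeries R := PowerSeries.mk fun n => ((wtSet w S n).ncard : R)

theorem wtGen_mul (R : Type) [CommRing R] {α : Type} [DecidableEq α] (w : α → ℕ) (S : Finset α) :
    (∀ x ∈ S, 0 < w x) →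
    wtGen R w S * ∏ x ∈ S, (1 - (PowerSeries.X : PowerSeries R) ^ w x) = 1 := by
  induction S using Finset.induction_on with
  | empty =>
    intro _
    rw [Finset.prod_empty, mul_one]
    ext n
    rw [wtGen, PowerSeries.coeff_mk, PowerSeries.coeff_one]
    have : wtSet w ∅ n = if n = 0 then {0} else ∅ := by
      ext s
      constructor
      · rintro ⟨h1, h2⟩
        have : s = 0 := Multiset.eq_zero_of_forall_notMem fun x hx => by simpa using h1 x hx
        subst this
        simp at h2
        simp [← h2]
      · split_ifs with h
        · rintro rfl
          simp [wtSet, h]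
        · simp
    rw [this]
    split_ifs <;> simp
  | insert a S ha ih =>
    intro hw
    have hwS : ∀ x ∈ S, 0 < w x := fun x hx => hw x (Finset.mem_insert_of_mem hx)
    rw [Finset.prod_insert ha, ← mul_assoc]
    have : wtGen R w (insert a S) * (1 - (PowerSeries.X : PowerSeries R) ^ w a) = wtGen R w S := by
      ext n
      rw [mul_sub, mul_one, map_sub, PowerSeries.coeff_mul_X_pow', wtGen, wtGen]
      simp only [PowerSeries.coeff_mk]
      rw [wtSet_insert w S a ha hw n]
      split_ifs <;> push_cast <;> ring
    rw [this, ih hwS]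

theorem key_coeff (d p₁ p₂ n : ℕ) (hd : 0 < d) (hp₁ : p₁.Prime) (hp₂ : p₂.Prime)
    (hne : p₁ ≠ p₂) (hn : 1 ≤ n) :
    PowerSeries.coeff n (
      wtGen (ZMod p₂) (fun k : ℕ => k ^ d)
        ((Finset.Icc 1 n).filter fun k => ¬ p₁ ∣ k ∧ ¬ p₂ ∣ k) *
      wtGen (ZMod p₂) (fun x : ℕ × ℕ => x.1 ^ d)
        (((Finset.Icc 1 n).filter fun k => ¬ p₁ ∣ k) ×ˢ Finset.Icc 1 (p₂ ^ d - 1))) = 0 := by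
  have : Fact p₂.Prime := ⟨hp₂⟩
  set S := (Finset.Icc 1 n).filter fun k => ¬ p₁ ∣ k ∧ ¬ p₂ ∣ k with hS
  set T := (Finset.Icc 1 n).filter fun k => ¬ p₁ ∣ k with hT
  have h1 := wtGen_mul (ZMod p₂) (fun k : ℕ => k ^ d) S (by
    intro x hx
    simp [hS] at hx
    exact pow_pos (by omega) d)
  have h2 := wtGen_mul (ZMod p₂) (fun x : ℕ × ℕ => x.1 ^ d) (T ×ˢ Finset.Icc 1 (p₂ ^ d - 1)) (by
    intro x hx
    simp [hT] at hx
    exact pow_pos (by omega) d)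
  set G := wtGen (ZMod p₂) (fun k : ℕ => k ^ d) S
  set H := wtGen (ZMod p₂) (fun x : ℕ × ℕ => x.1 ^ d) (T ×ˢ Finset.Icc 1 (p₂ ^ d - 1))
  set f : ℕ → PowerSeries (ZMod p₂) := fun k => 1 - PowerSeries.X ^ (k ^ d) with hf
  have hq : 0 < p₂ ^ d := pow_pos hp₂.pos d
  have h2' : H * (∏ k ∈ T, f k) ^ (p₂ ^ d - 1) = 1 := by
    rw [← h2, Finset.prod_product]
    simp [hf, Finset.prod_pow]
  have hsplit : ∏ k ∈ T, f k = (∏ k ∈ S, f k) * ∏ k ∈ T.filter (fun k => p₂ ∣ k), f k := by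
    rw [← Finset.prod_filter_mul_prod_filter_not T (fun k => p₂ ∣ k), mul_comm]
    congr 2
    rw [hT, Finset.filter_filter]
  have hfrob : (∏ k ∈ T, f k) ^ (p₂ ^ d) = ∏ k ∈ T, f (p₂ * k) := by
    rw [← Finset.prod_pow]
    refine Finset.prod_congr rfl fun k _ => ?_
    have : CharP (PowerSeries (ZMod p₂)) p₂ :=
      charP_of_injective_algebraMap (R := ZMod p₂) (PowerSeries.C_injective) p₂
    simp only [hf]
    rw [sub_pow_char_pow, one_pow, ← pow_mul, mul_pow, mul_comm]
  have hmul : ∏ k ∈ T.filter (fun k => p₂ ∣ k), f k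
      = ∏ k ∈ T.filter (fun k => p₂ * k ≤ n), f (p₂ * k) := by
    symm
    refine Finset.prod_bij (fun k _ => p₂ * k) ?_ ?_ ?_ ?_
    · intro k hk
      simp only [hT, Finset.mem_filter, Finset.mem_Icc] at hk ⊢
      refine ⟨⟨⟨Nat.mul_pos hp₂.pos (by omega), hk.2⟩, fun h => ?_⟩, dvd_mul_right _ _⟩
      rcases hp₁.dvd_mul.1 h with h | h
      · exact hne ((Nat.prime_dvd_prime_iff_eq hp₁ hp₂).1 h)
      · exact hk.1.2 h
    · intro a _ b _ hab
      exact Nat.eq_of_mul_eq_mul_left hp₂.pos hab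
    · intro b hb
      simp only [hT, Finset.mem_filter, Finset.mem_Icc] at hb
      obtain ⟨⟨hb1, hb2⟩, k, rfl⟩ := hb
      refine ⟨k, ?_, rfl⟩
      simp only [hT, Finset.mem_filter, Finset.mem_Icc]
      have hk : 0 < k := Nat.pos_of_ne_zero (by rintro rfl; simp at hb1)
      refine ⟨⟨⟨hk, ?_⟩, fun h => hb2 (h.mul_left _)⟩, hb1.2⟩
      exact (Nat.le_mul_of_pos_left k hp₂.pos).trans hb1.2
    · intro _ _
      rfl
  set D := ∏ k ∈ T.filter (fun k => p₂ * k ≤ n), f (p₂ * k) with hD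
  set R := ∏ k ∈ T.filter (fun k => ¬ p₂ * k ≤ n), f (p₂ * k) with hR
  have hDR : ∏ k ∈ T, f (p₂ * k) = D * R :=
    (Finset.prod_filter_mul_prod_filter_not T (fun k => p₂ * k ≤ n) _).symm
  have hD0 : D ≠ 0 := by
    rw [hD, Finset.prod_ne_zero_iff]
    intro k hk h0
    simp only [hT, Finset.mem_filter, Finset.mem_Icc] at hk
    have hpos : 0 < (p₂ * k) ^ d := pow_pos (Nat.mul_pos hp₂.pos (by omega)) d
    have := congrArg (PowerSeries.coeff 0) h0
    simp only [hf, map_sub, PowerSeries.coeff_X_pow, PowerSeries.coeff_one, map_zero] at this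
    rw [if_neg hpos.ne] at this
    simp at this
  have hGHR : G * H * R = 1 := by
    apply mul_left_cancel₀ hD0
    have e : (∏ k ∈ T, f k) ^ (p₂ ^ d) = (∏ k ∈ T, f k) ^ (p₂ ^ d - 1) * ∏ k ∈ T, f k := by
      rw [← pow_succ, Nat.sub_add_cancel hq]
    rw [hfrob, hDR] at e
    rw [hmul] at hsplit
    calc D * (G * H * R) = G * H * (D * R) := by ring
      _ = (H * (∏ k ∈ T, f k) ^ (p₂ ^ d - 1)) * (G * (∏ k ∈ S, f k)) * D := by
        rw [e]
        nth_rewrite 2 [hsplit]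
        ring
      _ = D * 1 := by rw [h2', h1]; ring
  have hR1 : (PowerSeries.X : PowerSeries (ZMod p₂)) ^ (n + 1) ∣ R - 1 := by
    rw [hR]
    refine Finset.prod_induction _ (fun x => (PowerSeries.X : PowerSeries (ZMod p₂)) ^ (n + 1) ∣ x - 1)
      ?_ ?_ ?_
    · intro a b ha hb
      have : a * b - 1 = (a - 1) * b + (b - 1) := by ring
      rw [this]
      exact dvd_add (ha.mul_right _) hb
    · simp
    · intro k hk
      simp only [Finset.mem_filter, not_le] at hk
      have : f (p₂ * k) - 1 = - PowerSeries.X ^ ((p₂ * k) ^ d) := by simp [hf]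
      rw [this, dvd_neg]
      refine pow_dvd_pow _ ?_
      exact hk.2.trans_le (Nat.le_self_pow hd.ne' _)
  have hGH : G * H = 1 - G * H * (R - 1) := by
    rw [mul_sub, hGHR]
    ring
  rw [hGH, map_sub, PowerSeries.X_pow_dvd_iff.1 (hR1.mul_left (G * H)) n (by omega),
    PowerSeries.coeff_one, if_neg (by omega), sub_zero]

theorem base_le {d k : ℕ} (hd : 0 < d) {α : Type} (g : α → ℕ) (s : Multiset α) (x : α)
    (hx : x ∈ s) (hk : (s.map fun y => g y ^ d).sum = k) : g x ≤ k :=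
  (Nat.le_self_pow hd.ne' _).trans
    (hk ▸ Multiset.le_sum_of_mem (Multiset.mem_map_of_mem (fun y => g y ^ d) hx))

theorem A_eq (d p₁ p₂ n i : ℕ) (hd : 0 < d) (hi : i ≤ n) :
    A d p₁ p₂ i = (wtSet (fun k : ℕ => k ^ d)
        ((Finset.Icc 1 n).filter fun k => ¬ p₁ ∣ k ∧ ¬ p₂ ∣ k) i).ncard := by
  unfold A
  rw [← Nat.card_coe_set_eq]
  refine Nat.card_congr (Equiv.subtypeEquivRight fun s => ?_)
  simp only [wtSet, Set.mem_ofPred_eq, Finset.mem_filter, Finset.mem_Icc]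
  constructor
  · rintro ⟨h1, h2⟩
    refine ⟨fun x hx => ⟨⟨(h1 x hx).1, ?_⟩, (h1 x hx).2⟩, h2⟩
    exact (base_le hd (fun y => y) s x hx h2).trans hi
  · rintro ⟨h1, h2⟩
    exact ⟨fun x hx => ⟨(h1 x hx).1.1, (h1 x hx).2⟩, h2⟩

theorem C_eq (d p₁ p₂ n i : ℕ) (hd : 0 < d) (hi : i ≤ n) :
    C d p₂ p₁ i = (wtSet (fun x : ℕ × ℕ => x.1 ^ d)
        (((Finset.Icc 1 n).filter fun k => ¬ p₁ ∣ k) ×ˢ Finset.Icc 1 (p₂ ^ d - 1)) i).ncard := by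
  unfold C
  rw [← Nat.card_coe_set_eq]
  refine Nat.card_congr (Equiv.subtypeEquivRight fun s => ?_)
  simp only [wtSet, Set.mem_ofPred_eq, Finset.mem_product, Finset.mem_filter, Finset.mem_Icc]
  constructor
  · rintro ⟨h1, h2⟩
    refine ⟨fun x hx => ⟨⟨⟨(h1 x hx).1, ?_⟩, (h1 x hx).2.1⟩, (h1 x hx).2.2⟩, h2⟩
    exact (base_le hd (fun y => y.1) s x hx h2).trans hi
  · rintro ⟨h1, h2⟩
    exact ⟨fun x hx => ⟨(h1 x hx).1.1.1, (h1 x hx).1.2, (h1 x hx).2⟩, h2⟩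

theorem stmt2 (d p₁ p₂ n : ℕ) (hd : 0 < d) (hp₁ : p₁.Prime) (hp₂ : p₂.Prime)
    (hne : p₁ ≠ p₂) (hp₂3 : 3 ≤ p₂) (hn : 1 ≤ n) :
    (∑ i ∈ Finset.range (n + 1), A d p₁ p₂ i * C d p₂ p₁ (n - i)) ≡ 0 [MOD p₂] := by
  rw [← ZMod.natCast_eq_natCast_iff]
  push_cast
  rw [← key_coeff d p₁ p₂ n hd hp₁ hp₂ hne hn, PowerSeries.coeff_mul,
    Finset.Nat.sum_antidiagonal_eq_sum_range_succ_mk]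
  refine Finset.sum_congr rfl fun i hi => ?_
  have hi' : i ≤ n := by
    have := Finset.mem_range.1 hi
    omega
  simp only [wtGen, PowerSeries.coeff_mk]
  rw [A_eq d p₁ p₂ n i hd hi', C_eq d p₁ p₂ n (n - i) hd (Nat.sub_le _ _)]
end

section
/- Let $d$ be a positive integer, let $p_2 \geq 3$ be an odd integer, and let $n$ be a non-negative integer. Then $A_{2,p_2}(n) = D_{p_2}(n)$, i.e., the number of partitions of $n$ into $d$-th powers of integers divisible by neither $2$ nor $p_2$ equals the number of partitions of $n$ into $d$-th powers of odd integers in which no part appears more than $p_2^d-1$ times. -/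
/-- `D d p₂ n`: the number of partitions of `n` all of whose parts are `d`-th powers of
positive odd integers, in which every part occurs with multiplicity at most `p₂ ^ d - 1`;
represented as multisets of the bases `k`. -/
noncomputable def D (d p₂ n : ℕ) : ℕ :=
  Nat.card {s : Multiset ℕ //
    (∀ k ∈ s, 0 < k ∧ Odd k) ∧ (∀ k, s.count k ≤ p₂ ^ d - 1) ∧
    (s.map (· ^ d)).sum = n}

open Finset in
theorem conv_card (SA SB SP : Multiset ℕ → Prop) (w v : Multiset ℕ → ℕ)
    (f : Multiset ℕ → Multiset ℕ → Multiset ℕ)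
    (finA : ∀ n, Finite {s // SA s ∧ w s = n}) (finB : ∀ n, Finite {s // SB s ∧ v s = n})
    (hf : ∀ a b, SA a → SB b → SP (f a b)) (hw : ∀ a b, SA a → SB b → w (f a b) = w a + v b)
    (hinj : ∀ a b a' b', SA a → SB b → SA a' → SB b' → f a b = f a' b' → a = a' ∧ b = b')
    (hsurj : ∀ s, SP s → ∃ a b, SA a ∧ SB b ∧ f a b = s) (n : ℕ) :
    Nat.card {s // SP s ∧ w s = n} = ∑ x ∈ antidiagonal n,
      Nat.card {s // SA s ∧ w s = x.1} * Nat.card {s // SB s ∧ v s = x.2} := by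
  rw [← Finset.sum_coe_sort]
  simp_rw [← Nat.card_prod]
  rw [← Nat.card_sigma]
  symm
  refine Nat.card_congr (Equiv.ofBijective
    (fun y => ⟨f y.2.1.1 y.2.2.1, hf _ _ y.2.1.2.1 y.2.2.2.1, ?_⟩) ⟨?_, ?_⟩)
  · rw [hw _ _ y.2.1.2.1 y.2.2.2.1, y.2.1.2.2, y.2.2.2.2]
    exact mem_antidiagonal.1 y.1.2
  · rintro ⟨⟨⟨i, j⟩, hx⟩, ⟨a, ha, h1⟩, ⟨b, hb, h2⟩⟩ ⟨⟨⟨i', j'⟩, hx'⟩, ⟨a', ha', h3⟩, ⟨b', hb', h4⟩⟩ h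
    dsimp only at h1 h2 h3 h4
    obtain ⟨rfl, rfl⟩ := hinj a b a' b' ha hb ha' hb' (congrArg Subtype.val h)
    subst h1 h2 h3 h4
    rfl
  · rintro ⟨s, hs, rfl⟩
    obtain ⟨a, b, ha, hb, rfl⟩ := hsurj s hs
    exact ⟨⟨⟨(w a, v b), mem_antidiagonal.2 (hw a b ha hb).symm⟩, ⟨a, ha, rfl⟩, ⟨b, hb, rfl⟩⟩, rfl⟩

theorem fin_aux (d : ℕ) (hd : 0 < d) (S : Multiset ℕ → Prop) (hS : ∀ s, S s → ∀ k ∈ s, 0 < k)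
    (n : ℕ) : Finite {s : Multiset ℕ // S s ∧ (s.map (· ^ d)).sum = n} := by
  have : Set.Finite {s : Multiset ℕ | S s ∧ (s.map (· ^ d)).sum = n} := by
    refine Set.Finite.subset (Set.finite_Iic (n • (Multiset.range (n + 1)))) ?_
    rintro s ⟨hs, hn⟩
    have hk : ∀ k ∈ s, 0 < k := hS s hs
    rw [Set.mem_Iic, Multiset.le_iff_count]
    intro k
    by_cases hks : k ∈ s
    · have h1 : k ^ d ≤ n := by
        rw [← hn]; exact Multiset.single_le_sum (fun _ _ => Nat.zero_le _) _
          (Multiset.mem_map_of_mem _ hks)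
      have h2 : k ≤ n := (Nat.le_self_pow hd.ne' k).trans h1
      have h3 : s.card ≤ n := by
        rw [← hn]
        have := Multiset.card_nsmul_le_sum (s := s.map (· ^ d)) (a := 1) (by
          intro x hx
          obtain ⟨y, hy, rfl⟩ := Multiset.mem_map.1 hx
          exact Nat.pow_pos (hk y hy))
        simpa using this
      have h4 : 1 ≤ (Multiset.range (n+1)).count k :=
        Multiset.one_le_count_iff_mem.2 (Multiset.mem_range.2 (by omega))
      rw [Multiset.count_nsmul]
      have := s.count_le_card k
      nlinarith
    · simp [Multiset.count_eq_zero_of_notMem hks]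
  exact this

theorem stmt4 (d p₂ : ℕ) (hd : 0 < d) (hp₂ : 3 ≤ p₂) (hodd : Odd p₂) (n : ℕ) :
    A d 2 p₂ n = D d p₂ n := by
  have hq : 0 < p₂ ^ d := Nat.pow_pos (by omega)
  let w : Multiset ℕ → ℕ := fun s => (s.map (· ^ d)).sum
  let v : Multiset ℕ → ℕ := fun s => p₂ ^ d * w s
  let SP : Multiset ℕ → Prop := fun s => ∀ k ∈ s, 0 < k ∧ Odd k
  let SA : Multiset ℕ → Prop := fun s => ∀ k ∈ s, 0 < k ∧ ¬ 2 ∣ k ∧ ¬ p₂ ∣ k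
  let SD : Multiset ℕ → Prop := fun s =>
    (∀ k ∈ s, 0 < k ∧ Odd k) ∧ (∀ k, s.count k ≤ p₂ ^ d - 1)
  have finA : ∀ n, Finite {s // SA s ∧ w s = n} := fin_aux d hd SA (fun s h k hk => (h k hk).1)
  have finD : ∀ n, Finite {s // SD s ∧ w s = n} := fin_aux d hd SD (fun s h k hk => (h.1 k hk).1)
  have finP : ∀ n, Finite {s // SP s ∧ v s = n} := by
    intro n
    have := fin_aux d hd SP (fun s h k hk => (h k hk).1) (n / p₂ ^ d)
    refine Finite.of_injective (β := {s // SP s ∧ w s = n / p₂ ^ d})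
      (fun s => ⟨s.1, s.2.1, ?_⟩) ?_
    · exact (Nat.div_eq_of_eq_mul_right hq s.2.2.symm).symm
    · intro a b h
      exact Subtype.ext (Subtype.mk.inj h)
  have cA := conv_card SA SP SP w v (fun a b => a + b.map (p₂ * ·)) finA finP
    (by
      intro a b ha hb k hk
      rcases Multiset.mem_add.1 hk with h | h
      · have := ha k h
        exact ⟨this.1, Nat.not_even_iff_odd.1 (fun h => this.2.1 h.two_dvd)⟩
      · obtain ⟨y, hy, rfl⟩ := Multiset.mem_map.1 h
        exact ⟨Nat.mul_pos (by omega) (hb y hy).1, hodd.mul (hb y hy).2⟩)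
    (by
      intro a b _ _
      simp [w, v, Multiset.map_map, mul_pow, Multiset.sum_map_mul_left])
    (by
      have key : ∀ a b : Multiset ℕ, SA a → (a + b.map (p₂ * ·)).filter (fun k => ¬ p₂ ∣ k) = a := by
        intro a b ha
        rw [Multiset.filter_add, Multiset.filter_eq_self.2 (fun k hk => (ha k hk).2.2),
          Multiset.filter_eq_nil.2, add_zero]
        intro k hk
        obtain ⟨y, hy, rfl⟩ := Multiset.mem_map.1 hk
        simp
      intro a b a' b' ha hb ha' hb' h
      have e : a = a' := by rw [← key a b ha, ← key a' b' ha', h]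
      subst e
      refine ⟨rfl, ?_⟩
      exact Multiset.map_injective (fun x y hxy => Nat.eq_of_mul_eq_mul_left (by omega) hxy)
        (add_left_cancel h))
    (by
      intro s hs
      refine ⟨s.filter (fun k => ¬ p₂ ∣ k), (s.filter (fun k => p₂ ∣ k)).map (· / p₂), ?_, ?_, ?_⟩
      · intro k hk
        rw [Multiset.mem_filter] at hk
        have := hs k hk.1
        exact ⟨this.1, fun h => Nat.not_even_iff_odd.2 this.2 (even_iff_two_dvd.2 h), hk.2⟩
      · intro k hk
        obtain ⟨y, hy, rfl⟩ := Multiset.mem_map.1 hk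
        rw [Multiset.mem_filter] at hy
        obtain ⟨hy, z, rfl⟩ := hy
        have := hs _ hy
        rw [Nat.mul_div_cancel_left _ (by omega)]
        exact ⟨Nat.pos_of_mul_pos_left this.1, (Nat.odd_mul.1 this.2).2⟩
      · rw [Multiset.map_map, Multiset.map_congr (g := id) rfl, Multiset.map_id, add_comm,
          Multiset.filter_add_not]
        intro x hx
        exact Nat.mul_div_cancel' (Multiset.mem_filter.1 hx).2)
  have cD := conv_card SD SP SP w v (fun a b => a + p₂ ^ d • b) finD finP
    (by
      intro a b ha hb k hk
      rcases Multiset.mem_add.1 hk with h | h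
      · exact ha.1 k h
      · exact hb k (Multiset.mem_of_mem_nsmul h))
    (by
      intro a b _ _
      simp [w, v, Multiset.map_nsmul, Multiset.sum_nsmul])
    (by
      intro a b a' b' ha hb ha' hb' h
      have key : ∀ k, a.count k = a'.count k ∧ b.count k = b'.count k := by
        intro k
        have h1 := congrArg (Multiset.count k) h
        simp only [Multiset.count_add, Multiset.count_nsmul] at h1
        have h2 : a.count k < p₂ ^ d := by have := ha.2 k; omega
        have h3 : a'.count k < p₂ ^ d := by have := ha'.2 k; omega
        have h4 := congrArg (· % p₂ ^ d) h1
        simp only [Nat.add_mul_mod_self_left, Nat.mod_eq_of_lt h2, Nat.mod_eq_of_lt h3] at h4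
        refine ⟨h4, ?_⟩
        rw [h4] at h1
        exact Nat.eq_of_mul_eq_mul_left hq (by omega)
      exact ⟨Multiset.ext.2 fun k => (key k).1, Multiset.ext.2 fun k => (key k).2⟩)
    (by
      intro s hs
      let g : (ℕ → ℕ) → Multiset ℕ := fun u => ∑ k ∈ s.toFinset, Multiset.replicate (u k) k
      have hg : ∀ u : ℕ → ℕ, (∀ k, k ∉ s → u k = 0) → ∀ k, (g u).count k = u k := by
        intro u hu k
        simp only [g, Multiset.count_sum', Multiset.count_replicate]
        rw [Finset.sum_ite_eq']
        by_cases hk : k ∈ s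
        · simp [hk]
        · simp [hk, hu k hk]
      have hm : ∀ u : ℕ → ℕ, ∀ k ∈ g u, k ∈ s := by
        intro u k hk
        simp only [g, Multiset.mem_sum] at hk
        obtain ⟨i, hi, hk⟩ := hk
        rw [Multiset.eq_of_mem_replicate hk]
        exact Multiset.mem_toFinset.1 hi
      have h1 := hg (fun k => s.count k % p₂ ^ d)
        (fun k hk => by simp [Multiset.count_eq_zero_of_notMem hk])
      have h2 := hg (fun k => s.count k / p₂ ^ d)
        (fun k hk => by simp [Multiset.count_eq_zero_of_notMem hk])
      refine ⟨g (fun k => s.count k % p₂ ^ d), g (fun k => s.count k / p₂ ^ d),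
        ⟨fun k hk => hs k (hm _ k hk), fun k => ?_⟩, fun k hk => hs k (hm _ k hk), ?_⟩
      · rw [h1]
        have := Nat.mod_lt (s.count k) hq
        omega
      · ext k
        rw [Multiset.count_add, Multiset.count_nsmul, h1, h2]
        exact Nat.mod_add_div _ _)
  have hmain : (PowerSeries.mk fun n => (Nat.card {s // SA s ∧ w s = n} : ℤ)) =
      PowerSeries.mk fun n => (Nat.card {s // SD s ∧ w s = n} : ℤ) := by
    have hG : (PowerSeries.mk fun n => (Nat.card {s // SP s ∧ v s = n} : ℤ)) ≠ 0 := by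
      intro h
      have h0 := congrArg (PowerSeries.coeff 0) h
      rw [PowerSeries.coeff_mk, map_zero] at h0
      have : Nonempty {s // SP s ∧ v s = 0} := ⟨0, by simp [SP], by simp [v, w]⟩
      have := finP 0
      have := Nat.card_pos (α := {s // SP s ∧ v s = 0})
      omega
    refine mul_right_cancel₀ hG ?_
    ext m
    simp only [PowerSeries.coeff_mul, PowerSeries.coeff_mk]
    have := (cA m).symm.trans (cD m)
    exact_mod_cast this
  have h := congrArg (PowerSeries.coeff n) hmain
  simp only [PowerSeries.coeff_mk] at h
  have h' : Nat.card {s // SA s ∧ w s = n} = Nat.card {s // SD s ∧ w s = n} := by exact_mod_cast h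
  have e : Nat.card {s // SD s ∧ w s = n} = D d p₂ n :=
    Nat.card_congr (Equiv.subtypeEquivRight fun s => and_assoc)
  exact h'.trans e
end
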